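/- Moves commute with projections: if k ≤ n and X is an infinite configuration, then π_n(φ_k(X)) = φ_k(π_n(X)), where on the left φ_k acts on infinite configurations and on the right φ_k acts on n-configurations. -/

import Mathlib

/-! The move on `n`-configurations inserts a ball and then deletes the leftmost one, so it
factors through `(n + 1)`-configurations. Inserting a ball commutes with truncation up to the
shift `n ↦ n + 1`: `φ_k (π_n X) = π_{n+1} (φ_k X)` (`move_proj`), because the `k`-th ball from
the right survives in `π_n X` when `k ≤ n`, so the new ball lands among the retained ones.
Deleting the leftmost of the `n + 1` rightmost balls leaves the `n` rightmost ones: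
`removeLeft (π_{n+1} Y) = π_n Y` (`removeLeft_proj`). The theorem is the combination of these
two identities for `Y = φ_k X`. -/

open Finset

/-! Bins are indexed by `t : ℕ`, where index `t` stands for the bin labeled `-t`
in the paper (so `t = 0` is the rightmost bin).  A configuration is a function
`X : ℕ → ℕ`, `X t` being the number of balls in bin `t`. -/

/-- `binSum X t` is the number of balls in bins `0, …, t-1`, i.e. strictly to the
right of bin `t`.  In the paper's notation this is `Σ_{j = -t+1}^{0} X(j)`. -/
def binSum (X : ℕ → ℕ) (t : ℕ) : ℕ := ∑ m ∈ Finset.range t, X m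

/-- An infinite configuration: every bin contains a positive number of balls. -/
def IsInfConf (X : ℕ → ℕ) : Prop := ∀ t, 0 < X t

/-- An `n`-configuration: for some `p ≥ 1`, bins `0, …, p-1` are nonempty, all the
other bins are empty, and the total number of balls is `n`. -/
def IsNConf (n : ℕ) (X : ℕ → ℕ) : Prop :=
  ∃ p : ℕ, 1 ≤ p ∧ (∀ t, t < p → 0 < X t) ∧ (∀ t, p ≤ t → X t = 0) ∧ binSum X p = n

/-- The `n`-ball projection `π_n`: keep the `n` rightmost balls, erase the others.
(Truncated subtraction makes the value `0` as soon as `binSum X t ≥ n`.) -/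
def proj (n : ℕ) (X : ℕ → ℕ) : ℕ → ℕ := fun t => min (X t) (n - binSum X t)

/-- The move `φ_k` on infinite configurations: if the rightmost bin contains at
least `k` balls, create a new rightmost bin containing one ball (shifting
everything); otherwise add one ball to the bin immediately to the right of the
bin containing the `k`-th ball counted from the right. -/
noncomputable def move (k : ℕ) (X : ℕ → ℕ) : ℕ → ℕ :=
  if k ≤ X 0 then fun t => if t = 0 then 1 else X (t - 1)
  else fun t => if t = sInf {b : ℕ | k ≤ binSum X (b + 1)} - 1 then X t + 1 else X t

/-- Delete one ball from the leftmost nonempty bin. -/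
noncomputable def removeLeft (X : ℕ → ℕ) : ℕ → ℕ :=
  fun t => if t = sSup {b : ℕ | 0 < X b} then X t - 1 else X t

/-- The move `φ_k` on `n`-configurations: add a ball to the bin immediately to the
right of the bin containing the `k`-th ball from the right (creating a new
rightmost bin if needed), then delete one ball from the leftmost nonempty bin. -/
noncomputable def moveFin (k : ℕ) (X : ℕ → ℕ) : ℕ → ℕ := removeLeft (move k X)

/-- Apply an algorithm, i.e. a finite composition of moves, to an infinite
configuration.  `applyAlg [k₁, …, kₘ] X = φ_{k₁}(φ_{k₂}(⋯ φ_{kₘ}(X)))`. -/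
noncomputable def applyAlg (w : List ℕ) (X : ℕ → ℕ) : ℕ → ℕ := w.foldr move X

/-- Apply an algorithm to a finite configuration. -/
noncomputable def applyAlgFin (w : List ℕ) (X : ℕ → ℕ) : ℕ → ℕ := w.foldr moveFin X

/-- The configuration denoted `[a₁, …, a_p]` in the paper: the list is read from
the leftmost nonempty bin to the rightmost bin. -/
def ofList (L : List ℕ) : ℕ → ℕ := fun t => L.reverse.getD t 0

/-- The distinguished `l`-configurations `X_i` (for `l = k*d + r`, `1 ≤ r ≤ k`):
`X_0 = [k, …, k, r]` (`d` bins of `k` balls), `X_i = [i, k, …, k, r-i]` (`d` bins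
of `k` balls) for `1 ≤ i ≤ r-1`, and `X_i = [i, k, …, k, k+r-i]` (`d-1` bins of
`k` balls) for `r ≤ i ≤ k-1`. -/
def distConf (k d r i : ℕ) : ℕ → ℕ :=
  if i = 0 then ofList (List.replicate d k ++ [r])
  else if i < r then ofList (i :: (List.replicate d k ++ [r - i]))
  else ofList (i :: (List.replicate (d - 1) k ++ [k + r - i]))

/-- The `l`-configurations `Y_j`: `Y_0 = [l]` and `Y_j = [j, l-j]` for `1 ≤ j ≤ l-1`. -/
def yConf (l j : ℕ) : ℕ → ℕ := if j = 0 then ofList [l] else ofList [j, l - j]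

/-- The map `f` from the paper: `f(i) = (k - l + d·i)₊` for `0 ≤ i ≤ k-r-1` and
`f(i) = (k - (d+1)(k-i))₊` for `k-r ≤ i ≤ k-1` (truncated ℕ-subtraction realizes
the positive part). -/
def fMap (k l d r : ℕ) (i : ℕ) : ℕ :=
  if i < k - r then k + d * i - l else k - (d + 1) * (k - i)

/-- The algorithm `Ψ = φ_k^{l-k} ∘ φ_l^{dr + k·d(d-1)/2} ∘ φ_k^{k-r}` acting on
`l`-configurations. -/
noncomputable def Psi (k l d r : ℕ) (X : ℕ → ℕ) : ℕ → ℕ :=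
  (moveFin k)^[l - k] ((moveFin l)^[d * r + k * (d * (d - 1)) / 2] ((moveFin k)^[k - r] X))

lemma binSum_succ (X : ℕ → ℕ) (t : ℕ) : binSum X (t + 1) = binSum X t + X t :=
  Finset.sum_range_succ _ _

lemma binSum_mono (X : ℕ → ℕ) : Monotone (binSum X) :=
  monotone_nat_of_le_succ fun t => by rw [binSum_succ]; omega

lemma binSum_proj (n : ℕ) (X : ℕ → ℕ) (t : ℕ) :
    binSum (proj n X) t = min (binSum X t) n := by
  induction t with
  | zero => simp [binSum]
  | succ t ih => rw [binSum_succ, binSum_succ, ih, proj]; omega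

lemma le_binSum {X : ℕ → ℕ} (hX : IsInfConf X) (t : ℕ) : t ≤ binSum X t := by
  induction t with
  | zero => simp
  | succ t ih => have := hX t; rw [binSum_succ]; omega

lemma isInfConf_move {X : ℕ → ℕ} (hX : IsInfConf X) (k : ℕ) : IsInfConf (move k X) := by
  intro t
  have h1 := hX t
  have h2 := hX (t - 1)
  unfold move
  split_ifs <;> dsimp only <;> split_ifs <;> omega

/-- Some bin `L` contains the `(n + 1)`-st ball counted from the right. -/
lemma exists_bin {X : ℕ → ℕ} (hX : IsInfConf X) (n : ℕ) :
    ∃ L, binSum X L ≤ n ∧ n < binSum X (L + 1) := by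
  classical
  have hex : ∃ L, n < binSum X (L + 1) := ⟨n, le_binSum hX (n + 1)⟩
  refine ⟨Nat.find hex, ?_, Nat.find_spec hex⟩
  rcases h : Nat.find hex with _ | m
  · simp [binSum]
  · exact not_lt.mp (Nat.find_min hex (m := m) (by omega))

/-- The leftmost nonempty bin of `π_{n+1} Y` is the one containing the `(n + 1)`-st ball of `Y`,
and that ball is the one erased in passing to `π_n Y`. -/
lemma removeLeft_proj {Y : ℕ → ℕ} (hY : IsInfConf Y) (n : ℕ) :
    removeLeft (proj (n + 1) Y) = proj n Y := by
  obtain ⟨L, hL, hL'⟩ := exists_bin hY n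
  have hsup : sSup {b : ℕ | 0 < proj (n + 1) Y b} = L := by
    refine IsGreatest.csSup_eq ⟨?_, ?_⟩
    · have := hY L
      simp only [Set.mem_ofPred_eq, proj]
      omega
    · intro b hb
      simp only [Set.mem_ofPred_eq, proj] at hb
      by_contra hlt
      have := binSum_mono Y (show L + 1 ≤ b by omega)
      omega
  funext t
  rw [removeLeft, hsup]
  rw [binSum_succ] at hL'
  simp only [proj]
  rcases lt_trichotomy t L with h | rfl | h
  · have := binSum_mono Y (show t + 1 ≤ L by omega)
    rw [binSum_succ] at this
    rw [if_neg (by omega)]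
    omega
  · rw [if_pos rfl]
    omega
  · have := binSum_mono Y (show L + 1 ≤ t by omega)
    rw [binSum_succ] at this
    rw [if_neg (by omega)]
    omega

lemma binSum_cons (X : ℕ → ℕ) (t : ℕ) :
    binSum (fun t => if t = 0 then 1 else X (t - 1)) (t + 1) = binSum X t + 1 := by
  simp [binSum, Finset.sum_range_succ']

lemma binSum_add_ball (X : ℕ → ℕ) (c t : ℕ) :
    binSum (fun t => if t = c then X t + 1 else X t) t = binSum X t + if c < t then 1 else 0 := by
  induction t with
  | zero => simp [binSum]
  | succ t ih =>
    rw [binSum_succ, binSum_succ, ih]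
    split_ifs <;> omega

/-- Inserting a ball into the `n` rightmost balls gives the `n + 1` rightmost balls of the
configuration after insertion. -/
lemma move_proj {k n : ℕ} (hkn : k ≤ n) (X : ℕ → ℕ) :
    move k (proj n X) = proj (n + 1) (move k X) := by
  have h0 : k ≤ proj n X 0 ↔ k ≤ X 0 := by simp [proj, binSum, hkn]
  have hset : {b : ℕ | k ≤ binSum (proj n X) (b + 1)} = {b : ℕ | k ≤ binSum X (b + 1)} := by
    ext b
    simp [binSum_proj, hkn]
  by_cases h : k ≤ X 0
  · rw [move, move, if_pos (h0.2 h), if_pos h]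
    funext t
    rcases t with _ | t
    · simp [proj, binSum]
    · simp only [proj, binSum_cons]
      simp
  · rw [move, move, if_neg (mt h0.1 h), if_neg h, hset]
    -- The ball is inserted in bin `c`; bins `0, …, c` together hold fewer than `k` balls.
    obtain ⟨c, hc⟩ : ∃ c, c = sInf {b : ℕ | k ≤ binSum X (b + 1)} - 1 := ⟨_, rfl⟩
    have hcl : binSum X (c + 1) < k := by
      by_contra hcon
      have hle : sInf {b : ℕ | k ≤ binSum X (b + 1)} ≤ c := Nat.sInf_le (not_lt.mp hcon)
      have hc0 : c = 0 := by omega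
      subst hc0
      simp [binSum] at hcon
      omega
    rw [← hc]
    funext t
    simp only [proj, binSum_add_ball]
    have hcl' := hcl
    rw [binSum_succ] at hcl'
    rcases lt_trichotomy t c with ht | rfl | ht
    · have := binSum_mono X (show t + 1 ≤ c by omega)
      rw [binSum_succ] at this
      rw [if_neg (by omega), if_neg (by omega), if_neg (by omega)]
      omega
    · rw [if_pos rfl, if_pos rfl, if_neg (by omega)]
      omega
    · rw [if_neg (by omega), if_neg (by omega), if_pos ht]
      omega

/-- Moves commute with projections: if `k ≤ n` and `X` is an
infinite configuration, then `π_n(φ_k(X)) = φ_k(π_n(X))`, where on the left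
`φ_k` acts on infinite configurations and on the right on `n`-configurations. -/
theorem proj_move_comm (k n : ℕ) (hk : 1 ≤ k) (hkn : k ≤ n)
    (X : ℕ → ℕ) (hX : IsInfConf X) :
    proj n (move k X) = moveFin k (proj n X) := by
  rw [moveFin, move_proj hkn X, removeLeft_proj (isInfConf_move hX k)]
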